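/- arXiv:2104.03108 — 5 statements merged into one kernel-verified Lean document; each statement's English description precedes it below -/
import Mathlib

section
/- (Fundamental lemma.) Suppose (A,B) is controllable and let z_{[0,T-1]} (with z(k)=[y(k);u(k)]) be a measured trajectory of Σ whose input component u_{[0,T-1]} is persistently exciting of order L+n. Then a pair of sequences (ū,ȳ) on {0,…,L-1}, stacked as z̄_{[0,L-1]} with z̄(k)=[ȳ(k);ū(k)], is a trajectory of Σ if and only if there exists a vector α ∈ ℝ^{T-L+1} such that H_L(z_{[0,T-1]}) α = z̄_{[0,L-1]}. -/
open Matrix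

theorem wfl_inj {ι κ : Type*} [Fintype ι] [Fintype κ] [DecidableEq κ] (M : Matrix ι κ ℝ)
    (h : M.rank = Fintype.card ι) (v : ι → ℝ) (hv : v ᵥ* M = 0) : v = 0 := by
  have hli : LinearIndependent ℝ M.row := by
    rw [linearIndependent_iff_card_eq_finrank_span, ← h, Matrix.rank_eq_finrank_span_row]
    rfl
  exact (Matrix.vecMul_injective_iff.2 hli) (by simpa using hv)

theorem wfl_surj {ι κ : Type*} [Fintype ι] [Fintype κ] [DecidableEq κ] (M : Matrix ι κ ℝ)
    (h : ∀ v : ι → ℝ, v ᵥ* M = 0 → v = 0) (w : ι → ℝ) : ∃ a, M *ᵥ a = w := by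
  have hli : LinearIndependent ℝ M.row := by
    rw [← Matrix.vecMul_injective_iff]
    intro a b hab
    exact sub_eq_zero.1 (h _ (by rw [Matrix.sub_vecMul]; exact sub_eq_zero.2 hab))
  have hr := hli.rank_matrix
  have htop : LinearMap.range M.mulVecLin = ⊤ := by
    apply Submodule.eq_top_of_finrank_eq
    rw [Module.finrank_fintype_fun_eq_card]
    exact hr
  obtain ⟨a, ha⟩ := LinearMap.range_eq_top.1 htop w
  exact ⟨a, ha⟩

theorem wfl_lin {n m N : ℕ} {q : ℕ} (P : Matrix (Fin q) (Fin n) ℝ) (Q : Matrix (Fin q) (Fin m) ℝ)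
    (a : Fin N → ℝ) (v : Fin N → Fin n → ℝ) (w : Fin N → Fin m → ℝ) :
    ∑ j, a j • (P *ᵥ v j + Q *ᵥ w j) = P *ᵥ (∑ j, a j • v j) + Q *ᵥ (∑ j, a j • w j) := by
  simp only [Matrix.mulVec_sum, Matrix.mulVec_smul, smul_add, Finset.sum_add_distrib]

theorem wfl_kernel {n m T L : ℕ} (hT : L + n ≤ T)
    (A : Matrix (Fin n) (Fin n) ℝ) (B : Matrix (Fin n) (Fin m) ℝ)
    (hctrb : (Matrix.of fun (i : Fin n) (jl : Fin n × Fin m) =>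
      (A ^ (jl.1 : ℕ) * B) i jl.2).rank = n)
    (u : ℕ → Fin m → ℝ) (x : ℕ → Fin n → ℝ)
    (hdyn : ∀ k < T, x (k + 1) = A.mulVec (x k) + B.mulVec (u k))
    (hpe : (Matrix.of fun (ir : Fin (L + n) × Fin m) (j : Fin (T - (L + n) + 1)) =>
      u ((ir.1 : ℕ) + (j : ℕ)) ir.2).rank = m * (L + n))
    (ξ : Fin n → ℝ) (η : ℕ → Fin m → ℝ)
    (h : ∀ j, j ≤ T - L → ξ ⬝ᵥ x j + ∑ i ∈ Finset.range L, η i ⬝ᵥ u (i + j) = 0) :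
    ξ = 0 ∧ ∀ i < L, η i = 0 := by
  set f : ℕ → Fin m → ℝ := fun i => if i < L then η (L - 1 - i) else ξ ᵥ* (A ^ (i - L) * B) with hf
  have hP : ∀ d j, j + d ≤ T - L → (ξ ᵥ* A ^ d) ⬝ᵥ x j +
      ∑ i ∈ Finset.range (L + d), f (L + d - 1 - i) ⬝ᵥ u (i + j) = 0 := by
    intro d
    induction d with
    | zero =>
      intro j hj
      rw [← h j hj]
      simp only [pow_zero, Matrix.vecMul_one, add_zero]
      congr 1
      refine Finset.sum_congr rfl fun i hi => ?_
      have := Finset.mem_range.1 hi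
      have h1 : L - 1 - i < L := by omega
      have h2 : L - 1 - (L - 1 - i) = i := by omega
      simp only [hf, h1, if_true, h2]
    | succ d ih =>
      intro j hj
      have h0 := ih (j + 1) (by omega)
      rw [hdyn j (by omega)] at h0
      rw [← add_assoc, Finset.sum_range_succ', ← h0]
      have h3 : f (L + d + 1 - 1 - 0) = ξ ᵥ* (A ^ d * B) := by
        have : ¬ (L + d + 1 - 1 - 0 < L) := by omega
        simp only [hf, this, if_false]
        congr 3
        omega
      have h4 : ∀ i, f (L + d + 1 - 1 - (i + 1)) ⬝ᵥ u (i + 1 + j)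
          = f (L + d - 1 - i) ⬝ᵥ u (i + (j + 1)) := by
        intro i
        congr 2 <;> omega
      simp only [h4]
      rw [h3, dotProduct_add, Matrix.dotProduct_mulVec, Matrix.dotProduct_mulVec,
        Matrix.vecMul_vecMul, Matrix.vecMul_vecMul, pow_succ, zero_add]
      ring
  set c : ℕ → ℝ := fun d => A.charpoly.coeff d with hc
  have hdeg : A.charpoly.natDegree = n := by simp
  have hcn : c n = 1 := by
    have := A.charpoly_monic
    rw [Polynomial.Monic, Polynomial.leadingCoeff, hdeg] at this
    exact this
  have hCH : ∑ d ∈ Finset.range (n + 1), c d • A ^ d = 0 := by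
    have := A.aeval_self_charpoly
    rw [Polynomial.aeval_eq_sum_range, hdeg] at this
    exact this
  set g : ℕ → Fin m → ℝ := fun i => ∑ d ∈ Finset.range (n + 1),
    if i < L + d then c d • f (L + d - 1 - i) else 0 with hg
  have hgs : ∀ j, j ≤ T - (L + n) → ∑ i ∈ Finset.range (L + n), g i ⬝ᵥ u (i + j) = 0 := by
    intro j hj
    have h1 : ∑ d ∈ Finset.range (n + 1), c d * ((ξ ᵥ* A ^ d) ⬝ᵥ x j +
      ∑ i ∈ Finset.range (L + d), f (L + d - 1 - i) ⬝ᵥ u (i + j)) = 0 := by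
      refine Finset.sum_eq_zero fun d hd => ?_
      have := Finset.mem_range.1 hd
      rw [hP d j (by omega), mul_zero]
    have h2 : ∑ d ∈ Finset.range (n + 1), c d * ((ξ ᵥ* A ^ d) ⬝ᵥ x j) = 0 := by
      have : ξ ⬝ᵥ ((∑ d ∈ Finset.range (n + 1), c d • A ^ d) *ᵥ x j) = 0 := by
        rw [hCH]; simp
      rw [← this, Matrix.sum_mulVec, dotProduct_sum]
      refine Finset.sum_congr rfl fun d _ => ?_
      rw [Matrix.smul_mulVec, dotProduct_smul, Matrix.dotProduct_mulVec, smul_eq_mul]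
    simp only [mul_add, Finset.sum_add_distrib, h2, zero_add] at h1
    rw [← h1]
    simp only [hg, sum_dotProduct]
    rw [Finset.sum_comm]
    refine Finset.sum_congr rfl fun d hd => ?_
    have hd' := Finset.mem_range.1 hd
    rw [Finset.mul_sum]
    symm
    have hsub : Finset.range (L + d) ⊆ Finset.range (L + n) :=
      Finset.range_subset_range.2 (by omega)
    rw [← Finset.sum_subset hsub (f := fun i =>
      (if i < L + d then c d • f (L + d - 1 - i) else 0) ⬝ᵥ u (i + j))]
    · refine Finset.sum_congr rfl fun i hi => ?_
      rw [if_pos (Finset.mem_range.1 hi), smul_dotProduct, smul_eq_mul]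
    · intro i _ hi
      rw [if_neg (by simpa using hi), zero_dotProduct]
  have hg0 : ∀ i < L + n, g i = 0 := by
    have := wfl_inj _ (by rw [hpe]; simp [mul_comm]) (fun ir : Fin (L + n) × Fin m => g ir.1 ir.2) (by
      ext j
      have := hgs j (by omega)
      rw [Finset.sum_range] at this
      simp only [Matrix.vecMul, dotProduct, Fintype.sum_prod_type, Matrix.of_apply,
        Pi.zero_apply] at this ⊢
      exact this)
    intro i hi
    ext r
    exact congrFun this (⟨i, hi⟩, r)
  have hf0 : ∀ r, r < L + n → f r = 0 := by
    intro r
    induction r using Nat.strong_induction_on with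
    | _ r ih =>
      intro hr
      have h1 := hg0 (L + n - 1 - r) (by omega)
      simp only [hg] at h1
      rw [Finset.sum_range_succ, Finset.sum_eq_zero, if_pos (by omega), hcn, one_smul, zero_add] at h1
      · rw [← h1]; congr 1; omega
      · intro d hd
        have := Finset.mem_range.1 hd
        split_ifs
        · rw [ih _ (by omega) (by omega), smul_zero]
        · rfl
  constructor
  · refine wfl_inj _ (by rw [hctrb]; simp) ξ ?_
    ext ⟨t, r⟩
    have h1 := congrFun (hf0 (L + t) (by omega)) r
    simp only [hf, Nat.not_lt.2 (Nat.le_add_right L t), if_false, Nat.add_sub_cancel_left] at h1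
    exact h1
  · intro i hi
    have h1 := hf0 (L - 1 - i) (by omega)
    have h2 : L - 1 - i < L := by omega
    have h3 : L - 1 - (L - 1 - i) = i := by omega
    simpa only [hf, h2, if_true, h3] using h1

/-- Willems' fundamental lemma. Suppose `(A,B)` is controllable and `(u,y)` (stacked
as `z(k) = [y(k); u(k)]`) is a measured trajectory of `Σ` on `{0,…,T-1}` whose input
is persistently exciting of order `L + n`. Then `(ū,ȳ)` is a trajectory of `Σ` on
`{0,…,L-1}` if and only if there exists `α ∈ ℝ^{T-L+1}` with
`H_L(z_{[0,T-1]}) α = z̄_{[0,L-1]}`. -/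
theorem fundamental_lemma {n m p T L : ℕ} (hL : 1 ≤ L) (hT : L + n ≤ T)
    (A : Matrix (Fin n) (Fin n) ℝ) (B : Matrix (Fin n) (Fin m) ℝ)
    (C : Matrix (Fin p) (Fin n) ℝ) (D : Matrix (Fin p) (Fin m) ℝ)
    -- `(A,B)` is controllable: the controllability matrix `[B, AB, …, A^{n-1}B]`
    -- has rank `n`.
    (hctrb : (Matrix.of fun (i : Fin n) (jl : Fin n × Fin m) =>
      (A ^ (jl.1 : ℕ) * B) i jl.2).rank = n)
    -- measured trajectory of `Σ` on `{0,…,T-1}`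
    (u : ℕ → Fin m → ℝ) (y : ℕ → Fin p → ℝ) (x : ℕ → Fin n → ℝ)
    (hdyn : ∀ k < T, x (k + 1) = A.mulVec (x k) + B.mulVec (u k))
    (hout : ∀ k < T, y k = C.mulVec (x k) + D.mulVec (u k))
    -- the input is persistently exciting of order `L + n`
    (hpe : (Matrix.of fun (ir : Fin (L + n) × Fin m) (j : Fin (T - (L + n) + 1)) =>
      u ((ir.1 : ℕ) + (j : ℕ)) ir.2).rank = m * (L + n))
    (ub : ℕ → Fin m → ℝ) (yb : ℕ → Fin p → ℝ) :
    -- `(ū,ȳ)` is a trajectory of `Σ` on `{0,…,L-1}` ...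
    (∃ xb : ℕ → Fin n → ℝ,
      (∀ k < L, xb (k + 1) = A.mulVec (xb k) + B.mulVec (ub k)) ∧
      (∀ k < L, yb k = C.mulVec (xb k) + D.mulVec (ub k))) ↔
    -- ... iff `z̄_{[0,L-1]} = H_L(z_{[0,T-1]}) α` for some `α`
    (∃ α : Fin (T - L + 1) → ℝ, ∀ i : Fin L,
      (fun s => (Matrix.of fun (is : Fin L × (Fin p ⊕ Fin m)) (j : Fin (T - L + 1)) =>
          Sum.elim (y ((is.1 : ℕ) + (j : ℕ))) (u ((is.1 : ℕ) + (j : ℕ))) is.2).mulVec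
        α (i, s)) = Sum.elim (yb (i : ℕ)) (ub (i : ℕ))) := by
  have key : ∀ (α : Fin (T - L + 1) → ℝ),
      (∀ k < L, ∑ j, α j • x (k + 1 + j) = A *ᵥ (∑ j, α j • x (k + j)) + B *ᵥ (∑ j, α j • u (k + j))) ∧
      (∀ k < L, ∑ j, α j • y (k + j) = C *ᵥ (∑ j, α j • x (k + j)) + D *ᵥ (∑ j, α j • u (k + j))) := by
    intro α
    constructor
    · intro k hk
      rw [← wfl_lin]
      refine Finset.sum_congr rfl fun j _ => ?_
      rw [← hdyn (k + j) (by omega)]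
      congr 2
      omega
    · intro k hk
      rw [← wfl_lin]
      refine Finset.sum_congr rfl fun j _ => ?_
      rw [← hout (k + j) (by omega)]
  have hH : ∀ (α : Fin (T - L + 1) → ℝ), (∀ i : Fin L,
      (fun s => (Matrix.of fun (is : Fin L × (Fin p ⊕ Fin m)) (j : Fin (T - L + 1)) =>
          Sum.elim (y ((is.1 : ℕ) + (j : ℕ))) (u ((is.1 : ℕ) + (j : ℕ))) is.2).mulVec
        α (i, s)) = Sum.elim (yb (i : ℕ)) (ub (i : ℕ))) ↔
      ∀ k < L, ∑ j, α j • y (k + j) = yb k ∧ ∑ j, α j • u (k + j) = ub k := by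
    intro α
    constructor
    · intro h k hk
      constructor
      · ext s
        have := congrFun (h ⟨k, hk⟩) (Sum.inl s)
        simpa [Matrix.mulVec, dotProduct, mul_comm] using this
      · ext s
        have := congrFun (h ⟨k, hk⟩) (Sum.inr s)
        simpa [Matrix.mulVec, dotProduct, mul_comm] using this
    · intro h i
      obtain ⟨h1, h2⟩ := h i i.2
      ext s
      rcases s with s | s
      · have := congrFun h1 s
        simpa [Matrix.mulVec, dotProduct, mul_comm] using this
      · have := congrFun h2 s
        simpa [Matrix.mulVec, dotProduct, mul_comm] using this
  simp only [hH]
  constructor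
  · rintro ⟨xb, hx, hy⟩
    obtain ⟨α, hα⟩ := wfl_surj (Matrix.of fun (r : Fin n ⊕ (Fin L × Fin m)) (j : Fin (T - L + 1)) =>
      Sum.elim (x j) (fun q => u (q.1 + j) q.2) r) (by
        intro v hv
        set η : ℕ → Fin m → ℝ := fun i s => if hi : i < L then v (Sum.inr (⟨i, hi⟩, s)) else 0 with hη
        obtain ⟨h1, h2⟩ := wfl_kernel hT A B hctrb u x hdyn hpe (fun i => v (Sum.inl i)) η (by
          intro j hj
          have := congrFun hv ⟨j, by omega⟩
          rw [Finset.sum_range]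
          simpa [Matrix.vecMul, dotProduct, Fintype.sum_prod_type, hη] using this)
        ext r
        rcases r with r | ⟨i, s⟩
        · exact congrFun h1 r
        · have := congrFun (h2 i i.2) s
          simpa [hη] using this) (Sum.elim (xb 0) (fun q => ub q.1 q.2))
    have hu : ∀ k < L, ∑ j, α j • u (k + j) = ub k := by
      intro k hk
      ext s
      have := congrFun hα (Sum.inr (⟨k, hk⟩, s))
      simpa [Matrix.mulVec, dotProduct, mul_comm] using this
    have hxx : ∀ k, k ≤ L → ∑ j, α j • x (k + j) = xb k := by
      intro k
      induction k with
      | zero =>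
        intro _
        ext s
        have := congrFun hα (Sum.inl s)
        simpa [Matrix.mulVec, dotProduct, mul_comm] using this
      | succ k ih =>
        intro hk
        rw [(key α).1 k (by omega), ih (by omega), hu k (by omega), hx k (by omega)]
    refine ⟨α, fun k hk => ⟨?_, hu k hk⟩⟩
    rw [(key α).2 k hk, hxx k hk.le, hu k hk, hy k hk]
  · rintro ⟨α, hα⟩
    refine ⟨fun k => ∑ j, α j • x (k + j), fun k hk => ?_, fun k hk => ?_⟩
    · rw [← (hα k hk).2]
      exact (key α).1 k hk
    · rw [← (hα k hk).2, ← (hα k hk).1]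
      exact (key α).2 k hk
end

section
/- (Finsler's lemma, equivalence (1)⇔(3).) Let Q ∈ ℝ^{n×n} be symmetric and B ∈ ℝ^{m×n} with rank(B) < n. Then wᵀQw < 0 for all nonzero w ∈ ℝ^n with Bw = 0 if and only if there exists μ ∈ ℝ such that Q − μ BᵀB is negative definite. -/
open Matrix

/-- Finsler's lemma, equivalence (1) ⇔ (3): for a symmetric `Q` and a matrix `B` of
rank less than `n`, the quadratic form of `Q` is negative on the nonzero kernel of `B`
iff there exists `μ ∈ ℝ` such that `Q - μ • (Bᵀ * B)` is negative definite. -/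
theorem finsler_one_iff_three {n m : ℕ}
    (Q : Matrix (Fin n) (Fin n) ℝ) (hQ : Q.IsSymm)
    (B : Matrix (Fin m) (Fin n) ℝ) (hB : B.rank < n) :
    (∀ w : Fin n → ℝ, w ≠ 0 → B.mulVec w = 0 → w ⬝ᵥ Q.mulVec w < 0) ↔
    (∃ μ : ℝ, ∀ w : Fin n → ℝ, w ≠ 0 →
      w ⬝ᵥ (Q - μ • (Bᵀ * B)).mulVec w < 0) := by
  have key : ∀ (μ : ℝ) (w : Fin n → ℝ), w ⬝ᵥ (Q - μ • (Bᵀ * B)).mulVec w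
      = w ⬝ᵥ Q.mulVec w - μ * (B.mulVec w ⬝ᵥ B.mulVec w) := by
    intro μ w
    rw [Matrix.sub_mulVec, dotProduct_sub, Matrix.smul_mulVec, dotProduct_smul, smul_eq_mul,
      ← Matrix.mulVec_mulVec, Matrix.dotProduct_mulVec w Bᵀ, Matrix.vecMul_transpose]
  constructor
  · intro h
    have hf : Continuous fun w : Fin n → ℝ => w ⬝ᵥ Q.mulVec w := by fun_prop
    have hg : Continuous fun w : Fin n → ℝ => B.mulVec w ⬝ᵥ B.mulVec w := by fun_prop
    have hK : IsCompact (Metric.sphere (0 : Fin n → ℝ) 1 ∩ {w | 0 ≤ w ⬝ᵥ Q.mulVec w}) :=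
      (isCompact_sphere _ _).inter_right (isClosed_le continuous_const hf)
    have hnn : ∀ w : Fin n → ℝ, 0 ≤ B.mulVec w ⬝ᵥ B.mulVec w := fun w =>
      Finset.sum_nonneg fun i _ => mul_self_nonneg _
    have hpos : ∀ w ∈ Metric.sphere (0 : Fin n → ℝ) 1 ∩ {w | 0 ≤ w ⬝ᵥ Q.mulVec w},
        0 < B.mulVec w ⬝ᵥ B.mulVec w := by
      rintro w ⟨hw1, hw2⟩
      refine lt_of_le_of_ne (hnn w) fun h0 => ?_
      have hw0 : w ≠ 0 := by
        rintro rfl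
        simp at hw1
      exact absurd (h w hw0 (dotProduct_self_eq_zero.1 h0.symm)) (not_lt.2 hw2)
    obtain ⟨C, hC⟩ := hK.bddAbove_image
      (hf.continuousOn.div hg.continuousOn fun w hw => (hpos w hw).ne')
    refine ⟨max C 0 + 1, fun w hw => ?_⟩
    have hs : ∀ u : Fin n → ℝ, ‖u‖ = 1 →
        u ⬝ᵥ Q.mulVec u - (max C 0 + 1) * (B.mulVec u ⬝ᵥ B.mulVec u) < 0 := by
      intro u hu
      have h1 := le_max_left C 0
      have h2 := le_max_right C 0
      by_cases hq : 0 ≤ u ⬝ᵥ Q.mulVec u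
      · have hm : u ∈ Metric.sphere (0 : Fin n → ℝ) 1 ∩ {w | 0 ≤ w ⬝ᵥ Q.mulVec w} :=
          ⟨by simpa using hu, hq⟩
        have hp := hpos u hm
        have h3 : (u ⬝ᵥ Q.mulVec u) / (B.mulVec u ⬝ᵥ B.mulVec u) ≤ C :=
          hC (Set.mem_image_of_mem _ hm)
        rw [div_le_iff₀ hp] at h3
        nlinarith
      · have := mul_nonneg (by linarith : 0 ≤ max C 0 + 1) (hnn u)
        linarith
    have hn : 0 < ‖w‖ := norm_pos_iff.2 hw
    have h4 := hs (‖w‖⁻¹ • w) (by rw [norm_smul, norm_inv, norm_norm, inv_mul_cancel₀ hn.ne'])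
    rw [← key] at h4
    rw [Matrix.mulVec_smul, smul_dotProduct, dotProduct_smul, smul_eq_mul, smul_eq_mul] at h4
    have hi : 0 < ‖w‖⁻¹ := inv_pos.2 hn
    exact neg_of_mul_neg_right (neg_of_mul_neg_right h4 hi.le) hi.le
  · rintro ⟨μ, h⟩ w hw hBw
    have := h w hw
    rw [key, hBw] at this
    simpa using this
end

section
/- (Finsler's lemma, equivalence (1)⇔(4).) Let Q ∈ ℝ^{n×n} be symmetric and B ∈ ℝ^{m×n} with rank(B) < n. Then wᵀQw < 0 for all nonzero w ∈ ℝ^n with Bw = 0 if and only if there exists X ∈ ℝ^{n×m} such that Q + XB + BᵀXᵀ is negative definite. -/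
open Matrix

lemma finsler_form {n m : ℕ} (Q : Matrix (Fin n) (Fin n) ℝ)
    (B : Matrix (Fin m) (Fin n) ℝ) (X : Matrix (Fin n) (Fin m) ℝ) (w : Fin n → ℝ) :
    w ⬝ᵥ (Q + X * B + Bᵀ * Xᵀ).mulVec w =
      w ⬝ᵥ Q.mulVec w + 2 * (w ⬝ᵥ X.mulVec (B.mulVec w)) := by
  have h : w ⬝ᵥ Bᵀ.mulVec (Xᵀ.mulVec w) = w ⬝ᵥ X.mulVec (B.mulVec w) := by
    rw [Matrix.dotProduct_mulVec, Matrix.vecMul_transpose, Matrix.mulVec_transpose,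
      dotProduct_comm, ← Matrix.dotProduct_mulVec]
  rw [Matrix.add_mulVec, Matrix.add_mulVec, dotProduct_add, dotProduct_add,
    ← Matrix.mulVec_mulVec, ← Matrix.mulVec_mulVec, h]
  ring

/-- Finsler's lemma, equivalence (1) ⇔ (4): for a symmetric `Q` and a matrix `B` of
rank less than `n`, the quadratic form of `Q` is negative on the nonzero kernel of `B`
iff there exists `X ∈ ℝ^{n×m}` such that `Q + X*B + Bᵀ*Xᵀ` is negative definite. -/
theorem finsler_one_iff_four {n m : ℕ}
    (Q : Matrix (Fin n) (Fin n) ℝ) (hQ : Q.IsSymm)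
    (B : Matrix (Fin m) (Fin n) ℝ) (hB : B.rank < n) :
    (∀ w : Fin n → ℝ, w ≠ 0 → B.mulVec w = 0 → w ⬝ᵥ Q.mulVec w < 0) ↔
    (∃ X : Matrix (Fin n) (Fin m) ℝ, ∀ w : Fin n → ℝ, w ≠ 0 →
      w ⬝ᵥ (Q + X * B + Bᵀ * Xᵀ).mulVec w < 0) := by
  constructor
  · intro h
    have hb : ∀ w : Fin n → ℝ, 0 ≤ B.mulVec w ⬝ᵥ B.mulVec w := fun w =>
      Finset.sum_nonneg fun i _ => mul_self_nonneg _
    obtain ⟨k, hk⟩ := (isCompact_sphere (0 : Fin n → ℝ) 1).elim_directed_cover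
      (fun k : ℕ => {w : Fin n → ℝ | w ⬝ᵥ Q.mulVec w - k * (B.mulVec w ⬝ᵥ B.mulVec w) < 0})
      (fun k => isOpen_lt (by fun_prop) continuous_const)
      (by
        intro w hw
        rw [Set.mem_iUnion]
        have hw0 : w ≠ 0 := by
          rintro rfl
          simp at hw
        by_cases hBw : B.mulVec w = 0
        · exact ⟨0, by simpa using h w hw0 hBw⟩
        · have hpos : 0 < B.mulVec w ⬝ᵥ B.mulVec w :=
            lt_of_le_of_ne (hb w) fun e => hBw (dotProduct_self_eq_zero.1 e.symm)
          obtain ⟨k, hk⟩ := exists_nat_gt ((w ⬝ᵥ Q.mulVec w) / (B.mulVec w ⬝ᵥ B.mulVec w))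
          rw [div_lt_iff₀ hpos] at hk
          exact ⟨k, sub_neg.2 hk⟩)
      (by
        apply Monotone.directed_le
        intro a c hac w hw
        simp only [Set.mem_setOf_eq] at hw ⊢
        have : (a : ℝ) ≤ c := by exact_mod_cast hac
        have := mul_le_mul_of_nonneg_right this (hb w)
        linarith)
    refine ⟨(-(k : ℝ) / 2) • Bᵀ, fun w hw => ?_⟩
    have hn : 0 < ‖w‖ := norm_pos_iff.2 hw
    have hu := hk (show ‖w‖⁻¹ • w ∈ Metric.sphere (0 : Fin n → ℝ) 1 by
      simp [norm_smul, hn.ne'])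
    simp only [Set.mem_setOf_eq, Matrix.mulVec_smul, smul_dotProduct, dotProduct_smul,
      smul_eq_mul] at hu
    have e : w ⬝ᵥ Bᵀ.mulVec (B.mulVec w) = B.mulVec w ⬝ᵥ B.mulVec w := by
      rw [Matrix.dotProduct_mulVec, Matrix.vecMul_transpose]
    rw [finsler_form, Matrix.smul_mulVec, dotProduct_smul, e, smul_eq_mul]
    have hi : 0 < ‖w‖⁻¹ * ‖w‖⁻¹ := by positivity
    by_contra hc
    push Not at hc
    have := mul_nonneg hi.le hc
    linarith
  · rintro ⟨X, hX⟩ w hw hBw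
    have := hX w hw
    rw [finsler_form, hBw] at this
    simpa using this
end

section
/- Let z : {0,…,T+N-1} → ℝ^q and define the stacked signal Z(k) = [z(k); z(k+1); …; z(k+N)] ∈ ℝ^{q(N+1)} for 0 ≤ k ≤ T-1. Then the Hankel matrices H_{L+N}(z_{[0,T+N-1]}) and H_L(Z_{[0,T-1]}) have the same rank. -/
open Matrix

/-- The Hankel matrix `H_{L+N}(z_{[0,T+N-1]})` of a signal `z` and the Hankel matrix
`H_L(Z_{[0,T-1]})` of its stacked version `Z(k) = [z(k); …; z(k+N)]` have the same
rank (both matrices have `T-L+1` columns). -/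
theorem hankel_stacked_rank_eq {q T L N : ℕ} (hL : 1 ≤ L) (hLT : L ≤ T)
    (z : ℕ → Fin q → ℝ) :
    (Matrix.of fun (ir : Fin (L + N) × Fin q) (j : Fin (T - L + 1)) =>
      z ((ir.1 : ℕ) + (j : ℕ)) ir.2).rank
    = (Matrix.of fun (kar : Fin L × (Fin (N + 1) × Fin q)) (j : Fin (T - L + 1)) =>
      z ((kar.1 : ℕ) + (kar.2.1 : ℕ) + (j : ℕ)) kar.2.2).rank := by
  rw [Matrix.rank_eq_finrank_span_row, Matrix.rank_eq_finrank_span_row]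
  have h : Set.range (Matrix.of fun (ir : Fin (L + N) × Fin q) (j : Fin (T - L + 1)) =>
      z ((ir.1 : ℕ) + (j : ℕ)) ir.2).row
    = Set.range (Matrix.of fun (kar : Fin L × (Fin (N + 1) × Fin q)) (j : Fin (T - L + 1)) =>
      z ((kar.1 : ℕ) + (kar.2.1 : ℕ) + (j : ℕ)) kar.2.2).row := by
    ext v
    constructor
    · rintro ⟨⟨i, r⟩, rfl⟩
      have hi := i.isLt
      refine ⟨(⟨min (i : ℕ) (L - 1), by omega⟩, (⟨(i : ℕ) - min (i : ℕ) (L - 1), by omega⟩, r)), ?_⟩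
      funext j
      have e : min (i : ℕ) (L - 1) + ((i : ℕ) - min (i : ℕ) (L - 1)) = i := by omega
      simp only [Matrix.row, Matrix.of_apply, e]
    · rintro ⟨⟨k, a, r⟩, rfl⟩
      have hk := k.isLt
      have ha := a.isLt
      exact ⟨(⟨k + a, by omega⟩, r), rfl⟩
  rw [h]
end

section
/- Let y, u : ℕ → ℝ satisfy y(k+2) + y(k+1) + y(k) = u(k) for all k ≥ 0, with zero initial conditions y(0) = y(1) = 0. Then for every K ≥ 0, Σ_{k=0}^{K-1} w₁(k) = y(K+1)² + y(K)², and in particular Σ_{k=0}^{K-1} w₁(k) ≥ 0, where w₁(k) = u(k)² − 2y(k)u(k) − 2y(k+1)u(k) + 2y(k)y(k+1) + y(k+1)². -/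
open Finset

/-- For the mass-spring-damper system `y(k+2) + y(k+1) + y(k) = u(k)` with zero
initial conditions `y(0) = y(1) = 0`, the partial sums of the supply rate
`w₁(k) = u(k)² − 2y(k)u(k) − 2y(k+1)u(k) + 2y(k)y(k+1) + y(k+1)²`
equal `y(K+1)² + y(K)²`, and in particular are nonnegative. -/
theorem msd_supply_sum_nonneg (y u : ℕ → ℝ)
    (hsys : ∀ k : ℕ, y (k + 2) + y (k + 1) + y k = u k)
    (h0 : y 0 = 0) (h1 : y 1 = 0) :
    ∀ K : ℕ,
      (∑ k ∈ Finset.range K,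
        (u k ^ 2 - 2 * y k * u k - 2 * y (k + 1) * u k
          + 2 * y k * y (k + 1) + y (k + 1) ^ 2)) = y (K + 1) ^ 2 + y K ^ 2 ∧
      0 ≤ ∑ k ∈ Finset.range K,
        (u k ^ 2 - 2 * y k * u k - 2 * y (k + 1) * u k
          + 2 * y k * y (k + 1) + y (k + 1) ^ 2) := by
  intro K
  have key : (∑ k ∈ Finset.range K,
        (u k ^ 2 - 2 * y k * u k - 2 * y (k + 1) * u k
          + 2 * y k * y (k + 1) + y (k + 1) ^ 2)) = y (K + 1) ^ 2 + y K ^ 2 := by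
    induction K with
    | zero => simp [h0, h1]
    | succ n ih =>
      rw [Finset.sum_range_succ, ih, ← hsys n]
      ring
  refine ⟨key, ?_⟩
  rw [key]
  positivity
end
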